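/- Let (X,d) be a proper metric space, ν₁,…,ν_N ∈ 𝒫₁(X), and λ = (λ₁,…,λ_N) ∈ Δ_N with every λᵢ > 0. Then min_{μ ∈ 𝒫₁(X)} ∑ᵢ λᵢ W₁(νᵢ,μ) = sup{∑ᵢ ∫_X uᵢ dνᵢ : uᵢ is λᵢ-Lipschitz on X for each i, and ∑ᵢ uᵢ ≤ 0 on X}, and the supremum on the right-hand side is attained. -/

import Mathlib

open MeasureTheory Filter Topology
open scoped ENNReal NNReal

/-- The set of couplings (transport plans): Borel probability measures on `X × X`
with first marginal `μ` and second marginal `ν`. -/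
def Couplings {X : Type*} [MeasurableSpace X] (μ ν : Measure X) :
    Set (Measure (X × X)) :=
  {γ | IsProbabilityMeasure γ ∧ γ.map Prod.fst = μ ∧ γ.map Prod.snd = ν}

/-- The Wasserstein distance of order `1` between two measures on a metric space:
the infimum over couplings `γ` of `∫ d(x,y) dγ`. -/
noncomputable def W1 {X : Type*} [MetricSpace X] [MeasurableSpace X]
    (μ ν : Measure X) : ℝ :=
  (⨅ γ ∈ Couplings μ ν, ∫⁻ p, edist p.1 p.2 ∂γ).toReal

/-- `𝒫₁(X)`: Borel probability measures on `X` with finite first moment. -/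
def P1 (X : Type*) [MetricSpace X] [MeasurableSpace X] : Set (Measure X) :=
  {μ | IsProbabilityMeasure μ ∧ ∀ x₀ : X, Integrable (fun x => dist x₀ x) μ}

/-- `λ` belongs to the simplex `Δ_N`: nonnegative weights summing to `1`. -/
def memSimplex {N : ℕ} (l : Fin N → ℝ) : Prop :=
  (∀ i, 0 ≤ l i) ∧ ∑ i, l i = 1

/-- The dispersion functional `μ ↦ ∑ᵢ λᵢ W₁(νᵢ, μ)`. -/
noncomputable def medCost {X : Type*} [MetricSpace X] [MeasurableSpace X] {N : ℕ}
    (l : Fin N → ℝ) (ν : Fin N → Measure X) (μ : Measure X) : ℝ :=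
  ∑ i, l i * W1 (ν i) μ

/-- The set of Wasserstein medians of `ν₁, …, ν_N` with weights `λ`:
minimizers over `𝒫₁(X)` of the dispersion functional. -/
def Med {X : Type*} [MetricSpace X] [MeasurableSpace X] {N : ℕ}
    (l : Fin N → ℝ) (ν : Fin N → Measure X) : Set (Measure X) :=
  {μ | μ ∈ P1 X ∧ ∀ ρ ∈ P1 X, medCost l ν μ ≤ medCost l ν ρ}

/-!
Integrating a Lipschitz inequality over transport plans shows that every dual value is at most every
primal value. Dual maximizers exist by the Arzelà–Ascoli theorem, once the components of a
competitor are normalized to agree at a base point.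

For the absence of a duality gap, let `D` bound the dual values. The constraints on families of
transport plans with prescribed first marginals, equal second marginals and total cost at most `D`
generate a cone of affine bounds on families of test functions. A contradictory bound in this cone
would, by McShane's construction of Lipschitz functions between given ones, yield a dual value above
`D`. The Hahn–Banach theorem therefore produces a linear functional satisfying all the bounds. The
bounds include tightness, so by Riesz–Markov–Kakutani the functional is a family of measures; their
common second marginal has cost at most `D`.
-/
section FirstMoment

lemma exists_lipschitzWith_between {X : Type*} [PseudoMetricSpace X] {K : ℝ≥0} {f g : X → ℝ}
    (h : ∀ x y, f x ≤ g y + K * dist x y) :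
    ∃ u : X → ℝ, LipschitzWith K u ∧ f ≤ u ∧ u ≤ g := by
  have hbdd (x : X) : BddBelow (Set.range fun y => g y + K * dist x y) :=
    ⟨f x, Set.forall_mem_range.2 (h x)⟩
  refine ⟨fun x => ⨅ y, (g y + K * dist x y), LipschitzWith.of_le_add_mul K fun x y => ?_,
    fun x => ?_, fun x => by simpa using ciInf_le (hbdd x) x⟩
  · have : Nonempty X := ⟨x⟩
    rw [← sub_le_iff_le_add]
    refine le_ciInf fun z => ?_
    have htri := mul_le_mul_of_nonneg_left (dist_triangle x y z) K.coe_nonneg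
    linarith [ciInf_le (hbdd x) z]
  · have : Nonempty X := ⟨x⟩
    exact le_ciInf (h x)

variable {X : Type*} [MetricSpace X] [MeasurableSpace X] [BorelSpace X] {μ : Measure X}
  {K : ℝ≥0} {u : X → ℝ}

lemma integrable_of_lipschitzWith (hμ : μ ∈ P1 X) (hu : LipschitzWith K u) : Integrable u μ := by
  have := hμ.1
  obtain ⟨x₀⟩ := nonempty_of_isProbabilityMeasure μ
  have hsub : Integrable (fun x => u x - u x₀) μ :=
    ((hμ.2 x₀).const_mul K).mono' (hu.continuous.sub continuous_const).aestronglyMeasurable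
      (ae_of_all _ fun x => by simpa only [dist_comm x₀, dist_eq_norm] using hu.dist_le_mul x x₀)
  exact (hsub.add (integrable_const (u x₀))).congr (ae_of_all _ fun x => sub_add_cancel _ _)

lemma integral_le_add_mul_integral_dist (hμ : μ ∈ P1 X) (hu : LipschitzWith K u) (x₀ : X) :
    ∫ x, u x ∂μ ≤ u x₀ + K * ∫ x, dist x₀ x ∂μ := by
  have := hμ.1
  have hdist := (hμ.2 x₀).const_mul (K : ℝ)
  calc ∫ x, u x ∂μ ≤ ∫ x, (u x₀ + K * dist x₀ x) ∂μ :=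
        integral_mono (integrable_of_lipschitzWith hμ hu) ((integrable_const _).add hdist)
          fun x => by simpa only [dist_comm] using hu.le_add_mul x x₀
    _ = u x₀ + K * ∫ x, dist x₀ x ∂μ := by
        rw [integral_add (integrable_const _) hdist, integral_const_mul]
        simp

end FirstMoment

section Wasserstein

lemma prod_mem_Couplings {X : Type*} [MeasurableSpace X] {μ ν : Measure X}
    [IsProbabilityMeasure μ] [IsProbabilityMeasure ν] : μ.prod ν ∈ Couplings μ ν :=
  ⟨inferInstance, by simp [Measure.map_fst_prod], by simp [Measure.map_snd_prod]⟩

variable {X : Type*} [MetricSpace X] [MeasurableSpace X] [BorelSpace X]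
  [SecondCountableTopology X] {μ ν : Measure X} {γ : Measure (X × X)}

lemma integrable_dist_of_mem_Couplings (hμ : μ ∈ P1 X) (hν : ν ∈ P1 X)
    (hγ : γ ∈ Couplings μ ν) : Integrable (fun p => dist p.1 p.2) γ := by
  have := hμ.1
  obtain ⟨x₀⟩ := nonempty_of_isProbabilityMeasure μ
  have hfst : Integrable (fun p => dist x₀ p.1) γ :=
    (hγ.2.1.symm ▸ hμ.2 x₀).comp_measurable measurable_fst
  have hsnd : Integrable (fun p => dist x₀ p.2) γ :=
    (hγ.2.2.symm ▸ hν.2 x₀).comp_measurable measurable_snd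
  refine (hfst.add hsnd).mono' (by fun_prop) (ae_of_all _ fun p => ?_)
  rw [Real.norm_of_nonneg dist_nonneg]
  exact dist_triangle_left p.1 p.2 x₀

lemma W1_eq_iInf_integral_dist (hμ : μ ∈ P1 X) (hν : ν ∈ P1 X) :
    W1 μ ν = ⨅ γ : Couplings μ ν, ∫ p, dist p.1 p.2 ∂(γ : Measure (X × X)) := by
  have hlintegral (γ : Couplings μ ν) :
      ∫⁻ p, edist p.1 p.2 ∂(γ : Measure (X × X)) =
        ENNReal.ofReal (∫ p, dist p.1 p.2 ∂(γ : Measure (X × X))) := by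
    simp only [edist_dist]
    exact (ofReal_integral_eq_lintegral_ofReal (integrable_dist_of_mem_Couplings hμ hν γ.2)
      (ae_of_all _ fun _ => dist_nonneg)).symm
  rw [W1, iInf_subtype', ENNReal.toReal_iInf fun γ => by simp [hlintegral γ]]
  exact iInf_congr fun γ => by
    rw [hlintegral, ENNReal.toReal_ofReal (integral_nonneg fun _ => dist_nonneg)]

lemma W1_le_integral_dist (hμ : μ ∈ P1 X) (hν : ν ∈ P1 X) (hγ : γ ∈ Couplings μ ν) :
    W1 μ ν ≤ ∫ p, dist p.1 p.2 ∂γ := by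
  rw [W1_eq_iInf_integral_dist hμ hν]
  exact ciInf_le ⟨0, Set.forall_mem_range.2 fun _ => integral_nonneg fun _ => dist_nonneg⟩
    (⟨γ, hγ⟩ : Couplings μ ν)

lemma integral_sub_integral_le_mul_W1 (hμ : μ ∈ P1 X) (hν : ν ∈ P1 X) {K : ℝ≥0} {u : X → ℝ}
    (hu : LipschitzWith K u) : ∫ x, u x ∂μ - ∫ x, u x ∂ν ≤ K * W1 μ ν := by
  have := hμ.1
  have := hν.1
  have : Nonempty (Couplings μ ν) := ⟨⟨_, prod_mem_Couplings⟩⟩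
  rw [W1_eq_iInf_integral_dist hμ hν, Real.mul_iInf_of_nonneg K.coe_nonneg]
  refine le_ciInf fun ⟨γ, hγ⟩ => ?_
  have hfst : Integrable (fun p => u p.1) γ :=
    (hγ.2.1.symm ▸ integrable_of_lipschitzWith hμ hu).comp_measurable measurable_fst
  have hsnd : Integrable (fun p => u p.2) γ :=
    (hγ.2.2.symm ▸ integrable_of_lipschitzWith hν hu).comp_measurable measurable_snd
  have hu_meas : StronglyMeasurable u := hu.continuous.stronglyMeasurable
  calc ∫ x, u x ∂μ - ∫ x, u x ∂ν = ∫ p, (u p.1 - u p.2) ∂γ := by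
        rw [integral_sub hfst hsnd, ← integral_map_of_stronglyMeasurable measurable_fst hu_meas,
          ← integral_map_of_stronglyMeasurable measurable_snd hu_meas, hγ.2.1, hγ.2.2]
    _ ≤ ∫ p, K * dist p.1 p.2 ∂γ :=
        integral_mono (hfst.sub hsnd) ((integrable_dist_of_mem_Couplings hμ hν hγ).const_mul _)
          fun p => sub_le_iff_le_add'.2 (hu.le_add_mul p.1 p.2)
    _ = K * ∫ p, dist p.1 p.2 ∂γ := integral_const_mul _ _

end Wasserstein

section DualProblem

variable {X ι : Type*} [Fintype ι] {K : ι → ℝ≥0} {u : ι → X → ℝ}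

/-- The admissible set of the Lipschitz dual problem with Lipschitz constants `K`. -/
def dualFeasible [PseudoMetricSpace X] (K : ι → ℝ≥0) : Set (ι → X → ℝ) :=
  {u | (∀ i, LipschitzWith (K i) (u i)) ∧ ∀ x, ∑ i, u i x ≤ 0}

/-- The objective `∑ᵢ ∫ uᵢ dνᵢ` of the Lipschitz dual problem. -/
noncomputable def dualValue [MeasurableSpace X] (ν : ι → Measure X) (u : ι → X → ℝ) : ℝ :=
  ∑ i, ∫ x, u i x ∂(ν i)

lemma zero_mem_dualFeasible [PseudoMetricSpace X] : (0 : ι → X → ℝ) ∈ dualFeasible K :=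
  ⟨fun _ => (LipschitzWith.const 0).weaken zero_le, by simp⟩

lemma add_const_mem_dualFeasible [PseudoMetricSpace X] (hu : u ∈ dualFeasible K) {c : ι → ℝ}
    (hc : ∑ i, c i = 0) : (fun i x => u i x + c i) ∈ dualFeasible K :=
  ⟨fun i => LipschitzWith.of_dist_le_mul fun x y => by simpa using (hu.1 i).dist_le_mul x y,
    fun x => by simpa [Finset.sum_add_distrib, hc] using hu.2 x⟩

variable [MetricSpace X] [MeasurableSpace X] [BorelSpace X] {ν : ι → Measure X}

lemma dualValue_le_sum_mul_W1 [SecondCountableTopology X] (hν : ∀ i, ν i ∈ P1 X)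
    (hu : u ∈ dualFeasible K) {μ : Measure X} (hμ : μ ∈ P1 X) :
    dualValue ν u ≤ ∑ i, K i * W1 (ν i) μ := by
  have hμu : ∑ i, ∫ x, u i x ∂μ ≤ 0 := by
    rw [← integral_finsetSum _ fun i _ => integrable_of_lipschitzWith hμ (hu.1 i)]
    exact integral_nonpos hu.2
  calc dualValue ν u ≤ dualValue ν u - ∑ i, ∫ x, u i x ∂μ := le_sub_self_iff _ |>.2 hμu
    _ = ∑ i, (∫ x, u i x ∂(ν i) - ∫ x, u i x ∂μ) := (Finset.sum_sub_distrib ..).symm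
    _ ≤ ∑ i, K i * W1 (ν i) μ :=
        Finset.sum_le_sum fun i _ => integral_sub_integral_le_mul_W1 (hν i) hμ (hu.1 i)

lemma dualValue_le_sum_apply_add (hν : ∀ i, ν i ∈ P1 X) (hu : u ∈ dualFeasible K) (x₀ : X) :
    dualValue ν u ≤ ∑ i, u i x₀ + ∑ i, K i * ∫ x, dist x₀ x ∂(ν i) := by
  rw [← Finset.sum_add_distrib]
  exact Finset.sum_le_sum fun i _ => integral_le_add_mul_integral_dist (hν i) (hu.1 i) x₀

lemma dualValue_add_const (hν : ∀ i, ν i ∈ P1 X) (hu : u ∈ dualFeasible K) {c : ι → ℝ}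
    (hc : ∑ i, c i = 0) : dualValue ν (fun i x => u i x + c i) = dualValue ν u := by
  have := fun i => (hν i).1
  have hint (i : ι) : ∫ x, (u i x + c i) ∂(ν i) = ∫ x, u i x ∂(ν i) + c i := by
    rw [integral_add (integrable_of_lipschitzWith (hν i) (hu.1 i)) (integrable_const _)]
    simp
  simp only [dualValue, hint, Finset.sum_add_distrib, hc, add_zero]

lemma dualValue_le_mul_of_mem_dualFeasible_mul (hν : ∀ i, ν i ∈ P1 X) [Nonempty X] {D : ℝ}
    (hD : ∀ v ∈ dualFeasible K, dualValue ν v ≤ D) {t : ℝ≥0}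
    (hu : u ∈ dualFeasible fun i => t * K i) : dualValue ν u ≤ t * D := by
  obtain rfl | ht := eq_or_ne t 0
  · obtain ⟨x₀⟩ := ‹Nonempty X›
    simpa using (dualValue_le_sum_apply_add hν hu x₀).trans (by simpa using hu.2 x₀)
  · have hmem : (fun i x => (t : ℝ)⁻¹ * u i x) ∈ dualFeasible K := by
      refine ⟨fun i => ?_, fun x => ?_⟩
      · simpa [← mul_assoc, ht, Function.comp_def] using
          (lipschitzWith_smul (t : ℝ)⁻¹).comp (hu.1 i)
      · rw [← Finset.mul_sum]
        exact mul_nonpos_of_nonneg_of_nonpos (by positivity) (hu.2 x)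
    have hle := hD _ hmem
    simp only [dualValue, integral_const_mul, ← Finset.mul_sum] at hle
    rwa [inv_mul_le_iff₀ (by positivity)] at hle

end DualProblem

section PinnedLipschitz

variable {X : Type*} [PseudoMetricSpace X]

/-- The `K`-Lipschitz functions on `X` whose value at the base point `x₀` lies in `[-B, B]`, as a
subset of the space of continuous maps with the compact-open topology. -/
def pinnedLipschitz (K : ℝ≥0) (x₀ : X) (B : ℝ) : Set C(X, ℝ) :=
  {f | LipschitzWith K f ∧ |f x₀| ≤ B}

variable {K : ℝ≥0} {x₀ : X} {B : ℝ}

lemma abs_le_add_mul_dist_of_lipschitzWith {f : X → ℝ} (hf : LipschitzWith K f)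
    (hB : |f x₀| ≤ B) (x : X) : |f x| ≤ B + K * dist x₀ x := by
  have hle := hf.dist_le_mul x₀ x
  rw [Real.dist_eq, abs_sub_comm] at hle
  linarith [abs_sub_abs_le_abs_sub (f x) (f x₀)]

lemma isCompact_pinnedLipschitz : IsCompact (pinnedLipschitz K x₀ B) := by
  refine ArzelaAscoli.isCompact_of_equicontinuous _ ?_
    (LipschitzWith.uniformEquicontinuous _ K fun f => f.2.1).equicontinuous
  have himage : ContinuousMap.toFun '' pinnedLipschitz K x₀ B =
      {f : X → ℝ | LipschitzWith K f} ∩ {f | |f x₀| ≤ B} :=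
    Set.Subset.antisymm (Set.image_subset_iff.2 fun _ hf => hf)
      fun f hf => ⟨⟨f, hf.1.continuous⟩, hf, rfl⟩
  rw [himage]
  refine (isCompact_univ_pi fun x => isCompact_Icc
      (a := -(B + K * dist x₀ x)) (b := B + K * dist x₀ x)).of_isClosed_subset
    ((isClosed_setOfPred_lipschitzWith K).inter
      (isClosed_le (continuous_apply x₀).abs continuous_const))
    fun f hf x _ => abs_le.1 (abs_le_add_mul_dist_of_lipschitzWith hf.1 hf.2 x)

end PinnedLipschitz

section DualAttainment

variable {X : Type*} [MetricSpace X] [MeasurableSpace X] [BorelSpace X]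

lemma continuousOn_integral_pinnedLipschitz [ProperSpace X] {K : ℝ≥0} {x₀ : X} {B : ℝ}
    {μ : Measure X} (hμ : μ ∈ P1 X) :
    ContinuousOn (fun f : C(X, ℝ) => ∫ x, f x ∂μ) (pinnedLipschitz K x₀ B) := by
  have := hμ.1
  intro f _
  refine tendsto_integral_filter_of_dominated_convergence (fun x => B + K * dist x₀ x)
    (.of_forall fun g => g.continuous.aestronglyMeasurable) ?_
    ((integrable_const B).add ((hμ.2 x₀).const_mul _))
    (ae_of_all _ fun x => ((continuous_eval_const x).tendsto f).mono_left
      nhdsWithin_le_nhds)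
  filter_upwards [self_mem_nhdsWithin] with g hg
  exact ae_of_all _ fun x => abs_le_add_mul_dist_of_lipschitzWith hg.1 hg.2 x

variable {ι : Type*} [Fintype ι] [Nonempty ι] {ν : ι → Measure X} {K : ι → ℝ≥0}

/-- The value of `u` is unchanged when constants with sum zero are added to its components, so these
can be taken to agree at `x₀`; their common value is then controlled because the value of `u` is
nonnegative. -/
lemma exists_pinned_dualValue_eq (hν : ∀ i, ν i ∈ P1 X) (x₀ : X) {u : ι → X → ℝ}
    (hu : u ∈ dualFeasible K) (hu_nonneg : 0 ≤ dualValue ν u) :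
    ∃ w ∈ dualFeasible K, dualValue ν w = dualValue ν u ∧
      ∀ i, |w i x₀| ≤ ∑ j, K j * ∫ x, dist x₀ x ∂(ν j) := by
  set C := ∑ j, K j * ∫ x, dist x₀ x ∂(ν j)
  set s := ∑ i, u i x₀
  have hcard : (1 : ℝ) ≤ Fintype.card ι := mod_cast Fintype.card_pos
  have hsum : ∑ i, (s / Fintype.card ι - u i x₀) = 0 := by
    rw [Finset.sum_sub_distrib, Finset.sum_const, Finset.card_univ, nsmul_eq_mul,
      mul_div_cancel₀ _ (by positivity), sub_self]
  refine ⟨_, add_const_mem_dualFeasible hu hsum, dualValue_add_const hν hu hsum, fun i => ?_⟩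
  have hle : -C ≤ s := by linarith [dualValue_le_sum_apply_add hν hu x₀]
  calc |u i x₀ + (s / Fintype.card ι - u i x₀)| = |s| / Fintype.card ι := by
        rw [add_sub_cancel, abs_div, Nat.abs_cast]
    _ ≤ |s| := div_le_self (abs_nonneg s) hcard
    _ = -s := abs_of_nonpos (hu.2 x₀)
    _ ≤ C := neg_le.1 hle

theorem exists_isMaxOn_dualValue [ProperSpace X] (hν : ∀ i, ν i ∈ P1 X) :
    ∃ u ∈ dualFeasible K, IsMaxOn (dualValue ν) (dualFeasible K) u := by
  have := (hν (Classical.arbitrary ι)).1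
  obtain ⟨x₀⟩ := nonempty_of_isProbabilityMeasure (ν (Classical.arbitrary ι))
  set C := ∑ j, K j * ∫ x, dist x₀ x ∂(ν j)
  let pinned : Set (ι → C(X, ℝ)) :=
    Set.univ.pi (fun i => pinnedLipschitz (K i) x₀ C) ∩ {f | ∀ x, ∑ i, f i x ≤ 0}
  have hcompact : IsCompact pinned := by
    refine (isCompact_univ_pi fun _ => isCompact_pinnedLipschitz).inter_right ?_
    simp only [Set.ofPred_forall]
    exact isClosed_iInter fun x => isClosed_le (by fun_prop) continuous_const
  have hcont : ContinuousOn (fun f : ι → C(X, ℝ) => dualValue ν fun i => f i) pinned :=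
    continuousOn_finsetSum _ fun i _ => (continuousOn_integral_pinnedLipschitz (hν i)).comp
      (continuous_apply i).continuousOn fun f hf => hf.1 i trivial
  have hC : 0 ≤ C :=
    Finset.sum_nonneg fun i _ => mul_nonneg (K i).coe_nonneg (integral_nonneg fun _ => dist_nonneg)
  have hzero : 0 ∈ pinned :=
    ⟨fun i _ => ⟨(LipschitzWith.const 0).weaken zero_le, by simpa using hC⟩, by simp⟩
  obtain ⟨f, hf, hmax⟩ := hcompact.exists_isMaxOn ⟨0, hzero⟩ hcont
  refine ⟨fun i => f i, ⟨fun i => (hf.1 i trivial).1, hf.2⟩, fun v hv => ?_⟩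
  obtain hv_neg | hv_nonneg := lt_or_ge (dualValue ν v) 0
  · exact hv_neg.le.trans (by simpa [dualValue] using hmax hzero)
  · obtain ⟨w, hw, hwv, hwC⟩ := exists_pinned_dualValue_eq hν x₀ hv hv_nonneg
    have hw_mem : (fun i => ⟨w i, (hw.1 i).continuous⟩ : ι → C(X, ℝ)) ∈ pinned :=
      ⟨fun i _ => ⟨hw.1 i, hwC i⟩, hw.2⟩
    exact hwv.symm.trans_le (hmax hw_mem)

end DualAttainment

section FunctionalAnalysis

/-- The Hahn–Banach theorem, with the cone `s` playing the role of the epigraph of a sublinear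
functional. -/
lemma exists_linearMap_le_of_epigraph {E : Type*} [AddCommGroup E] [Module ℝ E]
    (s : PointedCone ℝ (E × ℝ)) (hs : ∀ f, ∃ c, (f, c) ∈ s) (hs_zero : ∀ c, (0, c) ∈ s → 0 ≤ c) :
    ∃ L : E →ₗ[ℝ] ℝ, ∀ f c, (f, c) ∈ s → L f ≤ c := by
  let vertical : E × ℝ →ₗ.[ℝ] ℝ :=
    (LinearMap.snd ℝ E ℝ).toPMap (LinearMap.ker (LinearMap.fst ℝ E ℝ))
  have hnonneg (x : vertical.domain) (hx : (x : E × ℝ) ∈ s) : 0 ≤ vertical x := by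
    obtain ⟨⟨f, c⟩, rfl : f = 0⟩ := x
    exact hs_zero c hx
  have hcofinal (y : E × ℝ) : ∃ x : vertical.domain, (x : E × ℝ) + y ∈ s := by
    obtain ⟨f, c⟩ := y
    obtain ⟨b, hb⟩ := hs f
    exact ⟨⟨(0, b - c), rfl⟩, by simpa using hb⟩
  obtain ⟨G, hG_vertical, hG_nonneg⟩ := riesz_extension s vertical hnonneg hcofinal
  refine ⟨-(G ∘ₗ LinearMap.inl ℝ E ℝ), fun f c hf => ?_⟩
  have hG_snd : G (0, c) = c := hG_vertical ⟨(0, c), rfl⟩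
  have hG_add : G (f, c) = G (f, 0) + G (0, c) := by simp [← map_add]
  simp only [LinearMap.neg_apply, LinearMap.comp_apply, LinearMap.inl_apply]
  linarith [hG_nonneg _ hf]

open scoped BoundedContinuousFunction CompactlySupported

variable {Y : Type*} [TopologicalSpace Y]

/-- The restriction to `C_c(Y, ℝ)` of a positive functional on bounded continuous functions. -/
noncomputable def restrictCompactlySupported (Λ : (Y →ᵇ ℝ) →ₚ[ℝ] ℝ) : C_c(Y, ℝ) →ₚ[ℝ] ℝ :=
  .mk₀
    { toFun f := Λ f.toBoundedContinuousFunction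
      map_add' f g := map_add Λ f.toBoundedContinuousFunction g.toBoundedContinuousFunction
      map_smul' c f := map_smul Λ c f.toBoundedContinuousFunction }
    fun _ hf => map_nonneg Λ hf

variable [T2Space Y] [LocallyCompactSpace Y] {Λ : (Y →ᵇ ℝ) →ₚ[ℝ] ℝ}

lemma exists_compactlySupported_eqOn_one {K : Set Y} (hK : IsCompact K) :
    ∃ φ : C_c(Y, ℝ), Set.EqOn φ 1 K ∧ ∀ y, φ y ∈ Set.Icc 0 1 := by
  obtain ⟨φ, hφK, -, hφ_supp, hφ⟩ :=
    exists_continuous_one_zero_of_isCompact hK isClosed_empty (Set.disjoint_empty K)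
  exact ⟨⟨φ, hφ_supp⟩, hφK, hφ⟩

variable [MeasurableSpace Y] [BorelSpace Y]

lemma rieszMeasure_univ_le :
    RealRMK.rieszMeasure (restrictCompactlySupported Λ) Set.univ ≤ ENNReal.ofReal (Λ 1) := by
  rw [isOpen_univ.measure_eq_iSup_isCompact]
  refine iSup₂_le fun K _ => iSup_le fun hK => ?_
  obtain ⟨φ, hφK, hφ⟩ := exists_compactlySupported_eqOn_one hK
  calc RealRMK.rieszMeasure (restrictCompactlySupported Λ) K
      ≤ ENNReal.ofReal (Λ φ.toBoundedContinuousFunction) :=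
        RealRMK.rieszMeasure_le_of_eq_one _ (fun y => (hφ y).1) hK hφK
    _ ≤ ENNReal.ofReal (Λ 1) := ENNReal.ofReal_le_ofReal (OrderHomClass.mono Λ fun y => (hφ y).2)

instance isFiniteMeasure_rieszMeasure :
    IsFiniteMeasure (RealRMK.rieszMeasure (restrictCompactlySupported Λ)) :=
  ⟨rieszMeasure_univ_le.trans_lt ENNReal.ofReal_lt_top⟩

lemma map_le_integral_rieszMeasure
    (hΛ : ∀ ε > 0, ∃ K, IsCompact K ∧ ∀ f : Y →ᵇ ℝ, 0 ≤ f → f ≤ 1 → Set.EqOn f 0 K → Λ f ≤ ε)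
    {f : Y →ᵇ ℝ} (hf : 0 ≤ f) :
    Λ f ≤ ∫ y, f y ∂(RealRMK.rieszMeasure (restrictCompactlySupported Λ)) := by
  refine le_of_forall_pos_le_add fun ε hε => ?_
  obtain ⟨δ, hδ, hδε⟩ := exists_pos_mul_lt hε ‖f‖
  obtain ⟨K, hK, hΛK⟩ := hΛ δ hδ
  obtain ⟨φ, hφK, hφ⟩ := exists_compactlySupported_eqOn_one hK
  let ψ : Y →ᵇ ℝ := φ.toBoundedContinuousFunction
  let fφ : C_c(Y, ℝ) := ⟨f.toContinuousMap * φ.toContinuousMap, φ.hasCompactSupport.mul_left⟩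
  have hcompact : Λ (f * ψ) ≤ ∫ y, f y ∂(RealRMK.rieszMeasure (restrictCompactlySupported Λ)) :=
    calc Λ (f * ψ) = ∫ y, fφ y ∂(RealRMK.rieszMeasure (restrictCompactlySupported Λ)) :=
          (RealRMK.integral_rieszMeasure (restrictCompactlySupported Λ) fφ).symm
      _ ≤ ∫ y, f y ∂(RealRMK.rieszMeasure (restrictCompactlySupported Λ)) :=
          integral_mono ((f * ψ).integrable _) (f.integrable _) fun y =>
            mul_le_of_le_one_right (hf y) (hφ y).2
  have htail : Λ (f * (1 - ψ)) ≤ ε :=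
    calc Λ (f * (1 - ψ)) ≤ Λ (‖f‖ • (1 - ψ)) := OrderHomClass.mono Λ fun y =>
          mul_le_mul_of_nonneg_right (f.apply_le_norm y) (sub_nonneg.2 (hφ y).2)
      _ = ‖f‖ * Λ (1 - ψ) := map_smul Λ _ _
      _ ≤ ‖f‖ * δ := by
          gcongr
          exact hΛK _ (fun y => sub_nonneg.2 (hφ y).2) (fun y => sub_le_self _ (hφ y).1)
            fun y hy => sub_eq_zero.2 (hφK hy).symm
      _ ≤ ε := hδε.le
  calc Λ f = Λ (f * ψ) + Λ (f * (1 - ψ)) := by rw [← map_add]; ring_nf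
    _ ≤ _ := add_le_add hcompact htail

/-- `Λ` dominates the total mass of the representing measure, so the lower bound for nonnegative
functions also bounds `Λ f` from below, through `‖f‖ - f`. -/
theorem exists_isFiniteMeasure_integral_eq
    (hΛ : ∀ ε > 0, ∃ K, IsCompact K ∧ ∀ f : Y →ᵇ ℝ, 0 ≤ f → f ≤ 1 → Set.EqOn f 0 K → Λ f ≤ ε) :
    ∃ γ : Measure Y, IsFiniteMeasure γ ∧ ∀ f : Y →ᵇ ℝ, ∫ y, f y ∂γ = Λ f := by
  set γ := RealRMK.rieszMeasure (restrictCompactlySupported Λ)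
  have hmass : γ.real Set.univ ≤ Λ 1 :=
    ENNReal.toReal_le_of_le_ofReal (map_nonneg Λ fun _ => zero_le_one) rieszMeasure_univ_le
  have hle (f : Y →ᵇ ℝ) : ∫ y, f y ∂γ ≤ Λ f := by
    have h := map_le_integral_rieszMeasure hΛ (f := ‖f‖ • 1 - f)
      fun y => sub_nonneg.2 (by simpa using f.apply_le_norm y)
    rw [map_sub, map_smul, smul_eq_mul] at h
    have hsub : ∫ y, (‖f‖ • 1 - f) y ∂γ = ‖f‖ * γ.real Set.univ - ∫ y, f y ∂γ := by
      simpa [mul_comm] using integral_sub (μ := γ) (integrable_const ‖f‖) (f.integrable γ)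
    linarith [mul_le_mul_of_nonneg_left hmass (norm_nonneg f)]
  refine ⟨γ, inferInstance, fun f => (hle f).antisymm ?_⟩
  simpa [integral_neg] using hle (-f)

end FunctionalAnalysis

section BoundedTestFunctions

open scoped BoundedContinuousFunction

variable {Y : Type*} [TopologicalSpace Y] [MeasurableSpace Y]

lemma integral_le_of_forall_bounded_le [OpensMeasurableSpace Y] {γ : Measure Y}
    [IsFiniteMeasure γ] {f : Y → ℝ} (hf : Continuous f) (hf_nonneg : 0 ≤ f) {C : ℝ}
    (hC : ∀ g : Y →ᵇ ℝ, (∀ y, g y ≤ f y) → ∫ y, g y ∂γ ≤ C) :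
    Integrable f γ ∧ ∫ y, f y ∂γ ≤ C := by
  let trunc (n : ℕ) : Y →ᵇ ℝ := .ofNormedAddCommGroup (fun y => min (f y) n) (by fun_prop) n
    fun y => by
      rw [Real.norm_of_nonneg (le_min (hf_nonneg y) n.cast_nonneg)]
      exact min_le_right _ _
  have hlintegral : ∫⁻ y, ENNReal.ofReal (f y) ∂γ ≤ ENNReal.ofReal C := by
    refine le_of_tendsto' (lintegral_tendsto_of_tendsto_of_monotone
      (f := fun n y => ENNReal.ofReal (trunc n y)) (fun n => by fun_prop) ?_ ?_) fun n => ?_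
    · exact ae_of_all _ fun y m n hmn => ENNReal.ofReal_le_ofReal (min_le_min_left _ (mod_cast hmn))
    · refine ae_of_all _ fun y => tendsto_const_nhds.congr' ?_
      filter_upwards [eventually_ge_atTop ⌈f y⌉₊] with n hn
      exact congrArg _ (min_eq_left (Nat.ceil_le.1 hn)).symm
    · rw [← ofReal_integral_eq_lintegral_ofReal ((trunc n).integrable γ)
        (ae_of_all _ fun y => le_min (hf_nonneg y) n.cast_nonneg)]
      exact ENNReal.ofReal_le_ofReal (hC _ fun y => min_le_left _ _)
  refine ⟨⟨hf.aestronglyMeasurable, (hasFiniteIntegral_iff_ofReal (ae_of_all _ hf_nonneg)).2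
    (hlintegral.trans_lt ENNReal.ofReal_lt_top)⟩, ?_⟩
  rw [integral_eq_lintegral_of_nonneg_ae (ae_of_all _ hf_nonneg) hf.aestronglyMeasurable]
  exact ENNReal.toReal_le_of_le_ofReal (by simpa using hC 0 hf_nonneg) hlintegral

lemma eq_of_forall_integral_le [HasOuterApproxClosed Y] [BorelSpace Y] {μ ν : Measure Y}
    [IsFiniteMeasure μ] [IsFiniteMeasure ν]
    (h : ∀ f : Y →ᵇ ℝ, ∫ y, f y ∂μ ≤ ∫ y, f y ∂ν) : μ = ν :=
  ext_of_forall_integral_eq_of_IsFiniteMeasure fun f =>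
    (h f).antisymm (by simpa [integral_neg] using h (-f))

lemma coe_pi_single {ι Z : Type*} [TopologicalSpace Z] [DecidableEq ι] (i : ι) (g : Z →ᵇ ℝ)
    (k : ι) : ⇑((Pi.single i g : ι → Z →ᵇ ℝ) k) = (Pi.single i ⇑g : ι → Z → ℝ) k :=
  Pi.apply_single (fun _ (g : Z →ᵇ ℝ) => ⇑g) (fun _ => rfl) i g k

lemma sum_integral_single {ι Z : Type*} [TopologicalSpace Z] [MeasurableSpace Z] [Fintype ι]
    [DecidableEq ι] {γ : ι → Measure Z} (i : ι) (g : Z →ᵇ ℝ) :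
    ∑ k, ∫ z, (Pi.single i g : ι → Z →ᵇ ℝ) k z ∂(γ k) = ∫ z, g z ∂(γ i) := by
  rw [Fintype.sum_eq_single i fun k hk => by simp [hk], Pi.single_eq_same]

end BoundedTestFunctions

section PlanCone

lemma integrable_single_apply {Y ι : Type*} [MeasurableSpace Y] [DecidableEq ι]
    {μ : ι → Measure Y} {i : ι} {a : Y → ℝ} (ha : Integrable a (μ i)) (k : ι) :
    Integrable ((Pi.single i a : ι → Y → ℝ) k) (μ k) := by
  obtain rfl | hk := eq_or_ne k i
  · simpa using ha
  · simp [hk, integrable_zero]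

variable {X ι : Type*} [PseudoMetricSpace X] [MeasurableSpace X] [Fintype ι] {l : ι → ℝ≥0}
  {ν : ι → Measure X} {D c c' : ℝ} {f f' : ι → X × X → ℝ}

/-- The pairs `(f, c)` for which the bound `∑ᵢ ∫ fᵢ dγᵢ ≤ c`, over families `γᵢ` of transport plans
with first marginals `νᵢ`, equal second marginals and `∑ᵢ lᵢ ∫ d(x, y) dγᵢ ≤ D`, is certified by a
majorant of `fᵢ` that has one term for each of these three constraints. -/
noncomputable def planCone (l : ι → ℝ≥0) (ν : ι → Measure X) (D : ℝ) :
    PointedCone ℝ ((ι → X × X → ℝ) × ℝ) where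
  carrier := {q | ∃ (a b : ι → X → ℝ) (t : ℝ≥0), (∀ i, Integrable (a i) (ν i)) ∧
    (∀ x, ∑ i, b i x ≤ 0) ∧ (∀ i p, q.1 i p ≤ a i p.1 + b i p.2 + t * l i * dist p.1 p.2) ∧
    ∑ i, ∫ x, a i x ∂(ν i) + t * D ≤ q.2}
  zero_mem' := ⟨0, 0, 0, by simp [integrable_zero]⟩
  add_mem' := by
    rintro _ _ ⟨a, b, t, ha, hb, hle, hc⟩ ⟨a', b', t', ha', hb', hle', hc'⟩
    refine ⟨a + a', b + b', t + t', fun i => (ha i).add (ha' i), fun x => ?_, fun i p => ?_, ?_⟩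
    · simpa [Finset.sum_add_distrib] using add_nonpos (hb x) (hb' x)
    · have := add_le_add (hle i p) (hle' i p)
      simp only [Prod.fst_add, Pi.add_apply, NNReal.coe_add]
      linarith
    · simp only [Pi.add_apply, integral_add (ha _) (ha' _), Finset.sum_add_distrib, NNReal.coe_add,
        Prod.snd_add]
      linarith
  smul_mem' := by
    rintro (r : ℝ≥0) q ⟨a, b, t, ha, hb, hle, hc⟩
    refine ⟨r • a, r • b, r * t, fun i => (ha i).const_mul (r : ℝ), fun x => ?_, fun i p => ?_, ?_⟩
    · simpa [NNReal.smul_def, ← Finset.mul_sum] using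
        mul_nonpos_of_nonneg_of_nonpos r.coe_nonneg (hb x)
    · calc (r : ℝ) * q.1 i p ≤ r * (a i p.1 + b i p.2 + t * l i * dist p.1 p.2) :=
            mul_le_mul_of_nonneg_left (hle i p) r.coe_nonneg
        _ = r * a i p.1 + r * b i p.2 + ↑(r * t) * l i * dist p.1 p.2 := by push_cast; ring
    · calc ∑ i, ∫ x, (r : ℝ) * a i x ∂(ν i) + ↑(r * t) * D =
            r * (∑ i, ∫ x, a i x ∂(ν i) + t * D) := by
            simp only [integral_const_mul, ← Finset.mul_sum, NNReal.coe_mul]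
            ring
        _ ≤ r * q.2 := mul_le_mul_of_nonneg_left hc r.coe_nonneg

lemma mem_planCone_of_le (h : (f, c) ∈ planCone l ν D) (hf : f' ≤ f) (hc : c ≤ c') :
    (f', c') ∈ planCone l ν D := by
  obtain ⟨a, b, t, ha, hb, hle, hac⟩ := h
  exact ⟨a, b, t, ha, hb, fun i p => (hf i p).trans (hle i p), hac.trans hc⟩

lemma single_mem_planCone_of_le [DecidableEq ι] {i : ι} {g g' : X × X → ℝ}
    (h : (Pi.single i g, c) ∈ planCone l ν D) (hg : g' ≤ g) (hc : c ≤ c') :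
    (Pi.single i g', c') ∈ planCone l ν D :=
  mem_planCone_of_le h (update_le_update_iff.2 ⟨hg, fun _ _ => le_rfl⟩) hc

lemma fst_mem_planCone {a : ι → X → ℝ} (ha : ∀ i, Integrable (a i) (ν i)) :
    (fun i p => a i p.1, ∑ i, ∫ x, a i x ∂(ν i)) ∈ planCone l ν D :=
  ⟨a, 0, 0, ha, by simp, by simp, by simp⟩

lemma single_fst_mem_planCone [DecidableEq ι] {i : ι} {a : X → ℝ} (ha : Integrable a (ν i)) :
    (Pi.single i fun p => a p.1, ∫ x, a x ∂(ν i)) ∈ planCone l ν D := by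
  refine mem_planCone_of_le (fst_mem_planCone (integrable_single_apply ha)) (fun k => ?_) ?_
  · exact (Pi.apply_single (fun _ (g : X → ℝ) (p : X × X) => g p.1) (fun _ => rfl) i a k).ge
  · rw [Fintype.sum_eq_single i fun k hk => by simp [hk], Pi.single_eq_same]

lemma snd_mem_planCone {b : ι → X → ℝ} (hb : ∀ x, ∑ i, b i x ≤ 0) :
    (fun i p => b i p.2, 0) ∈ planCone l ν D :=
  ⟨0, b, 0, by simp [integrable_zero], hb, by simp, by simp⟩

lemma mul_dist_mem_planCone : (fun i p => l i * dist p.1 p.2, D) ∈ planCone l ν D :=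
  ⟨0, 0, 1, by simp [integrable_zero], by simp, by simp, by simp⟩

open scoped BoundedContinuousFunction

/-- The families of measures `γᵢ` on `X × X` that satisfy all the bounds in `planCone l ν D` on
bounded continuous functions. -/
def RespectsPlanCone (l : ι → ℝ≥0) (ν : ι → Measure X) (D : ℝ) (γ : ι → Measure (X × X)) : Prop :=
  ∀ (f : ι → X × X →ᵇ ℝ) (c : ℝ), (fun i => ⇑(f i), c) ∈ planCone l ν D →
    ∑ i, ∫ p, f i p ∂(γ i) ≤ c

lemma RespectsPlanCone.integral_le_of_single_mem [DecidableEq ι]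
    {γ : ι → Measure (X × X)} (hγ : RespectsPlanCone l ν D γ) {i : ι}
    {g : X × X →ᵇ ℝ} (hg : (Pi.single i ⇑g, c) ∈ planCone l ν D) : ∫ p, g p ∂(γ i) ≤ c := by
  simpa only [sum_integral_single] using
    hγ (Pi.single i g) c (by simpa only [coe_pi_single] using hg)

end PlanCone

section PlanFamilies

open scoped BoundedContinuousFunction

variable {X ι : Type*} [MetricSpace X] [MeasurableSpace X] [Fintype ι] {l : ι → ℝ≥0}
  {ν : ι → Measure X} {D c : ℝ}

lemma exists_dist_mem_planCone [DecidableEq ι] (hν : ∀ i, ν i ∈ P1 X) (hl : l ≠ 0) (x₀ : X)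
    (i : ι) : ∃ c, (Pi.single i (dist (x₀, x₀)), c) ∈ planCone l ν D := by
  obtain ⟨j, hj : l j ≠ 0⟩ := Function.ne_iff.1 hl
  refine ⟨_, Pi.single i (dist x₀) + Pi.single j (dist x₀),
    Pi.single i (dist x₀) - Pi.single j (dist x₀), (l j)⁻¹, fun k =>
      (integrable_single_apply ((hν i).2 x₀) k).add (integrable_single_apply ((hν j).2 x₀) k),
    fun x => ?_, fun k p => ?_, le_rfl⟩
  · simp [Finset.sum_sub_distrib, Pi.single_apply, ite_apply]
  have hmax : dist (x₀, x₀) p ≤ dist x₀ p.1 + dist x₀ p.2 :=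
    max_le_add_of_nonneg dist_nonneg dist_nonneg
  have htri : dist x₀ p.2 ≤ dist x₀ p.1 + dist p.1 p.2 := dist_triangle ..
  have hcost : 0 ≤ (l j : ℝ)⁻¹ * l k * dist p.1 p.2 := by positivity
  by_cases hki : k = i <;> by_cases hkj : k = j
  · subst hki hkj
    simpa [hj, add_assoc] using hmax.trans (add_le_add_right htri (dist x₀ p.1))
  · subst hki
    simpa [hkj] using le_add_of_le_of_nonneg hmax hcost
  · subst hkj
    simpa [hki, hj, ← sub_eq_add_neg, sub_add_eq_add_sub] using htri
  · simpa [hki, hkj] using hcost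

lemma exists_isCompact_single_mem_planCone [DecidableEq ι] [ProperSpace X]
    (hν : ∀ i, ν i ∈ P1 X) (hl : l ≠ 0) [Nonempty X] (i : ι) {ε : ℝ} (hε : 0 < ε) :
    ∃ K, IsCompact K ∧ ∀ g : X × X → ℝ, g ≤ 1 → Set.EqOn g 0 K →
      (Pi.single i g, ε) ∈ planCone l ν D := by
  obtain ⟨x₀⟩ := ‹Nonempty X›
  obtain ⟨c, hc⟩ := exists_dist_mem_planCone hν hl x₀ i
  obtain ⟨δ, hδ, hδε⟩ := exists_pos_mul_lt hε c
  refine ⟨Metric.closedBall (x₀, x₀) δ⁻¹, isCompact_closedBall .., fun g hg_one hgK => ?_⟩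
  have hg : g ≤ δ • dist (x₀, x₀) := fun p => by
    by_cases hp : p ∈ Metric.closedBall (x₀, x₀) δ⁻¹
    · exact (hgK hp).trans_le (mul_nonneg hδ.le dist_nonneg)
    · rw [Metric.mem_closedBall', not_le, inv_lt_iff_one_lt_mul₀' hδ] at hp
      exact (hg_one p).trans hp.le
  have hδc : (Pi.single i (δ • dist (x₀, x₀)), δ * c) ∈ planCone l ν D := by
    simpa only [Prod.smul_mk, smul_eq_mul, Pi.single_smul] using
      (planCone l ν D).smul_mem hδ.le hc
  exact single_mem_planCone_of_le hδc hg (by linarith)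

variable [BorelSpace X]

lemma nonneg_of_zero_mem_planCone [Nonempty X] (hν : ∀ i, ν i ∈ P1 X)
    (hD : ∀ v ∈ dualFeasible l, dualValue ν v ≤ D) (h : (0, c) ∈ planCone l ν D) : 0 ≤ c := by
  obtain ⟨a, b, t, ha, hb, hle, hc⟩ := h
  have hsandwich (i : ι) : ∃ u : X → ℝ, LipschitzWith (t * l i) u ∧ -a i ≤ u ∧ u ≤ b i :=
    exists_lipschitzWith_between fun x y => by
      have := hle i (x, y)
      simp only [Pi.zero_apply, Pi.neg_apply, NNReal.coe_mul] at this ⊢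
      linarith
  choose u hu_lip hau hub using hsandwich
  have hu : u ∈ dualFeasible fun i => t * l i :=
    ⟨hu_lip, fun x => (Finset.sum_le_sum fun i _ => hub i x).trans (hb x)⟩
  have hneg : -∑ i, ∫ x, a i x ∂(ν i) ≤ t * D :=
    calc -∑ i, ∫ x, a i x ∂(ν i) = ∑ i, ∫ x, (-a i) x ∂(ν i) := by
          simp [integral_neg]
      _ ≤ dualValue ν u := Finset.sum_le_sum fun i _ =>
          integral_mono (ha i).neg (integrable_of_lipschitzWith (hν i) (hu_lip i)) (hau i)
      _ ≤ t * D := dualValue_le_mul_of_mem_dualFeasible_mul hν hD hu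
  linarith

lemma exists_linearMap_le_of_mem_planCone [Nonempty X] (hν : ∀ i, ν i ∈ P1 X)
    (hD : ∀ v ∈ dualFeasible l, dualValue ν v ≤ D) :
    ∃ L : (ι → X × X →ᵇ ℝ) →ₗ[ℝ] ℝ, ∀ (f : ι → X × X →ᵇ ℝ) (c : ℝ),
      (fun i => ⇑(f i), c) ∈ planCone l ν D → L f ≤ c := by
  have := fun i => (hν i).1
  let coe : (ι → X × X →ᵇ ℝ) × ℝ →ₗ[ℝ] (ι → X × X → ℝ) × ℝ :=
    { toFun q := (fun i => q.1 i, q.2), map_add' _ _ := rfl, map_smul' _ _ := rfl }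
  refine exists_linearMap_le_of_epigraph ((planCone l ν D).comap coe) (fun f =>
    ⟨∑ i, ∫ _, ‖f i‖ ∂(ν i), mem_planCone_of_le
      (fst_mem_planCone fun i => integrable_const ‖f i‖) (fun i => (f i).apply_le_norm) le_rfl⟩)
    fun c hc => nonneg_of_zero_mem_planCone hν hD hc

lemma exists_respectsPlanCone [ProperSpace X] [Nonempty X] (hν : ∀ i, ν i ∈ P1 X)
    (hD : ∀ v ∈ dualFeasible l, dualValue ν v ≤ D) (hl : l ≠ 0) :
    ∃ γ : ι → Measure (X × X), (∀ i, IsFiniteMeasure (γ i)) ∧ RespectsPlanCone l ν D γ := by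
  classical
  obtain ⟨L, hL⟩ := exists_linearMap_le_of_mem_planCone hν hD
  have hL_single (i : ι) (g : X × X →ᵇ ℝ) (c : ℝ) (h : (Pi.single i ⇑g, c) ∈ planCone l ν D) :
      L (Pi.single i g) ≤ c :=
    hL _ _ (by simpa only [coe_pi_single] using h)
  let Λ (i : ι) : (X × X →ᵇ ℝ) →ₚ[ℝ] ℝ := .mk₀
    (L ∘ₗ LinearMap.single ℝ (fun _ => X × X →ᵇ ℝ) i) fun g hg => by
      have hzero : (Pi.single i 0, 0) ∈ planCone l ν D := by
        rw [Pi.single_zero]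
        exact zero_mem _
      have hneg := hL_single i (-g) 0
        (single_mem_planCone_of_le hzero (fun p => neg_nonpos.2 (hg p)) le_rfl)
      simpa [Pi.single_neg] using hneg
  have hΛ (i : ι) (ε : ℝ) (hε : 0 < ε) : ∃ K, IsCompact K ∧ ∀ g : X × X →ᵇ ℝ, 0 ≤ g → g ≤ 1 →
      Set.EqOn g 0 K → Λ i g ≤ ε := by
    obtain ⟨K, hK, hε⟩ := exists_isCompact_single_mem_planCone hν hl i hε
    exact ⟨K, hK, fun g _ hg hgK => hL_single i g ε (hε g hg hgK)⟩
  choose γ hγ_finite hγ using fun i => exists_isFiniteMeasure_integral_eq (hΛ i)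
  refine ⟨γ, hγ_finite, fun f c hf => ?_⟩
  calc ∑ i, ∫ p, f i p ∂(γ i) = ∑ i, L (Pi.single i (f i)) := by simp only [hγ]; rfl
    _ = L f := by rw [← map_sum, Finset.univ_sum_single]
    _ ≤ c := hL f c hf

namespace RespectsPlanCone

variable {γ : ι → Measure (X × X)} [∀ i, IsFiniteMeasure (γ i)]

lemma map_fst (hγ : RespectsPlanCone l ν D γ) (i : ι) [IsFiniteMeasure (ν i)] :
    (γ i).map Prod.fst = ν i := by
  classical
  refine eq_of_forall_integral_le fun a => ?_
  rw [integral_map_of_stronglyMeasurable measurable_fst a.continuous.stronglyMeasurable]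
  exact hγ.integral_le_of_single_mem (g := a.compContinuous ⟨Prod.fst, continuous_fst⟩)
    (single_fst_mem_planCone (a.integrable _))

lemma isProbabilityMeasure (hγ : RespectsPlanCone l ν D γ) (i : ι)
    [hν : IsProbabilityMeasure (ν i)] : IsProbabilityMeasure (γ i) := by
  have : IsProbabilityMeasure ((γ i).map Prod.fst) := hγ.map_fst i ▸ hν
  exact Measure.isProbabilityMeasure_of_map Prod.fst

lemma map_snd_mem_P1 (hγ : RespectsPlanCone l ν D γ) (hν : ∀ i, ν i ∈ P1 X) (hl : l ≠ 0) (i : ι) :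
    (γ i).map Prod.snd ∈ P1 X := by
  classical
  have := (hν i).1
  have := hγ.isProbabilityMeasure i
  refine ⟨Measure.isProbabilityMeasure_map measurable_snd.aemeasurable, fun x₀ => ?_⟩
  obtain ⟨c, hc⟩ := exists_dist_mem_planCone hν hl x₀ i
  refine (integral_le_of_forall_bounded_le (C := c) (by fun_prop) (fun _ => dist_nonneg)
    fun g hg => ?_).1
  rw [integral_map_of_stronglyMeasurable measurable_snd g.continuous.stronglyMeasurable]
  exact hγ.integral_le_of_single_mem (g := g.compContinuous ⟨Prod.snd, continuous_snd⟩)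
    (single_mem_planCone_of_le hc (fun p => (hg p.2).trans (le_max_right _ _)) le_rfl)

variable [SecondCountableTopology X]

lemma map_snd (hγ : RespectsPlanCone l ν D γ) (i j : ι) :
    (γ i).map Prod.snd = (γ j).map Prod.snd := by
  classical
  refine eq_of_forall_integral_le fun b => ?_
  rw [integral_map_of_stronglyMeasurable measurable_snd b.continuous.stronglyMeasurable,
    integral_map_of_stronglyMeasurable measurable_snd b.continuous.stronglyMeasurable]
  let b' : X × X →ᵇ ℝ := b.compContinuous ⟨Prod.snd, continuous_snd⟩
  have hmem : (fun k => ⇑((Pi.single i b' - Pi.single j b' : ι → X × X →ᵇ ℝ) k), 0) ∈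
      planCone l ν D := by
    refine mem_planCone_of_le (snd_mem_planCone
      (b := Pi.single i b - Pi.single j b) fun x => ?_) (fun k p => ?_) le_rfl
    · simp [Pi.single_apply, ite_apply]
    · have hpull (m : ι) : (Pi.single m ⇑b' : ι → X × X → ℝ) k p =
          (Pi.single m ⇑b : ι → X → ℝ) k p.2 :=
        (congrFun (Pi.apply_single (fun _ (g : X → ℝ) (p : X × X) => g p.2)
          (fun _ => rfl) m b k) p).symm
      simp only [Pi.sub_apply, BoundedContinuousFunction.coe_sub, coe_pi_single, hpull, le_refl]
  have hle := hγ _ 0 hmem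
  simp only [Pi.sub_apply, BoundedContinuousFunction.sub_apply] at hle
  simp_rw [integral_sub (BoundedContinuousFunction.integrable _ _)
    (BoundedContinuousFunction.integrable _ _)] at hle
  rwa [Finset.sum_sub_distrib, sum_integral_single, sum_integral_single, sub_nonpos] at hle

lemma sum_mul_integral_dist_le (hγ : RespectsPlanCone l ν D γ)
    (hdist : ∀ i, Integrable (fun p => dist p.1 p.2) (γ i)) :
    ∑ i, l i * ∫ p, dist p.1 p.2 ∂(γ i) ≤ D := by
  have hsum (g : X × X → ℝ) (hg : ∀ i, Integrable g (γ i)) :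
      ∫ p, g p ∂(∑ i, l i • γ i) = ∑ i, l i * ∫ p, g p ∂(γ i) := by
    rw [integral_finsetSum_measure fun i _ => (hg i).smul_measure_nnreal]
    simp only [integral_smul_nnreal_measure, NNReal.smul_def, smul_eq_mul]
  rw [← hsum _ hdist]
  refine (integral_le_of_forall_bounded_le (by fun_prop) (fun _ => dist_nonneg) fun g hg => ?_).2
  rw [hsum g fun i => g.integrable _]
  simp_rw [← integral_const_mul]
  exact hγ (fun i => (l i : ℝ) • g) D (mem_planCone_of_le mul_dist_mem_planCone
    (fun i p => mul_le_mul_of_nonneg_left (hg p) (l i).coe_nonneg) le_rfl)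

end RespectsPlanCone

end PlanFamilies

section StrongDuality

variable {X ι : Type*} [MetricSpace X] [ProperSpace X] [MeasurableSpace X] [BorelSpace X]
  [Fintype ι] [Nonempty ι] {l : ι → ℝ≥0} {ν : ι → Measure X}

lemma exists_mem_P1_sum_mul_W1_le (hν : ∀ i, ν i ∈ P1 X) {D : ℝ}
    (hD : ∀ v ∈ dualFeasible l, dualValue ν v ≤ D) :
    ∃ μ ∈ P1 X, ∑ i, l i * W1 (ν i) μ ≤ D := by
  let j : ι := Classical.arbitrary ι
  obtain rfl | hl := eq_or_ne l 0
  · exact ⟨ν j, hν j, by simpa [dualValue] using hD 0 zero_mem_dualFeasible⟩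
  have := fun i => (hν i).1
  have := nonempty_of_isProbabilityMeasure (ν j)
  obtain ⟨γ, hγ_finite, hγ⟩ := exists_respectsPlanCone hν hD hl
  have hμ : (γ j).map Prod.snd ∈ P1 X := hγ.map_snd_mem_P1 hν hl j
  have hcoupling (i : ι) : γ i ∈ Couplings (ν i) ((γ j).map Prod.snd) :=
    ⟨hγ.isProbabilityMeasure i, hγ.map_fst i, hγ.map_snd i j⟩
  refine ⟨_, hμ, ?_⟩
  calc ∑ i, l i * W1 (ν i) ((γ j).map Prod.snd) ≤ ∑ i, l i * ∫ p, dist p.1 p.2 ∂(γ i) := by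
        gcongr with i
        exact W1_le_integral_dist (hν i) hμ (hcoupling i)
    _ ≤ D := hγ.sum_mul_integral_dist_le fun i =>
        integrable_dist_of_mem_Couplings (hν i) hμ (hcoupling i)

theorem median_dual_lipschitz_formulation_general (hν : ∀ i, ν i ∈ P1 X) :
    ∃ u ∈ dualFeasible l, ∃ μ ∈ P1 X, IsMaxOn (dualValue ν) (dualFeasible l) u ∧
      IsMinOn (fun ρ => ∑ i, l i * W1 (ν i) ρ) (P1 X) μ ∧
      ∑ i, l i * W1 (ν i) μ = dualValue ν u := by
  obtain ⟨u, hu, hu_max⟩ := exists_isMaxOn_dualValue (K := l) hν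
  obtain ⟨μ, hμ, hμu⟩ := exists_mem_P1_sum_mul_W1_le hν fun v hv => hu_max hv
  exact ⟨u, hu, μ, hμ, hu_max, fun ρ hρ => hμu.trans (dualValue_le_sum_mul_W1 hν hu hρ),
    hμu.antisymm (dualValue_le_sum_mul_W1 hν hu hμ)⟩

end StrongDuality

/-- Lipschitz (dual) formulation: the minimal value of the Wasserstein
median problem equals the supremum of `∑ᵢ ∫ uᵢ dνᵢ` over families `(uᵢ)` with `uᵢ`
`λᵢ`-Lipschitz and `∑ᵢ uᵢ ≤ 0`, and this supremum is attained. -/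
theorem median_dual_lipschitz_formulation
    {X : Type*} [MetricSpace X] [ProperSpace X] [MeasurableSpace X] [BorelSpace X]
    {N : ℕ} (hN : 1 ≤ N) {l : Fin N → ℝ} (hl : memSimplex l)
    (hlpos : ∀ i, 0 < l i) {ν : Fin N → Measure X} (hν : ∀ i, ν i ∈ P1 X) :
    ∃ u : Fin N → X → ℝ,
      (∀ i, LipschitzWith (l i).toNNReal (u i)) ∧
      (∀ x : X, ∑ i, u i x ≤ 0) ∧
      (∀ v : Fin N → X → ℝ, (∀ i, LipschitzWith (l i).toNNReal (v i)) →
        (∀ x : X, ∑ i, v i x ≤ 0) →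
        ∑ i, ∫ x, v i x ∂(ν i) ≤ ∑ i, ∫ x, u i x ∂(ν i)) ∧
      (∀ μ ∈ P1 X, ∑ i, ∫ x, u i x ∂(ν i) ≤ medCost l ν μ) ∧
      (∃ μ ∈ P1 X, medCost l ν μ = ∑ i, ∫ x, u i x ∂(ν i)) := by
  have : Nonempty (Fin N) := ⟨⟨0, hN⟩⟩
  obtain ⟨u, hu, μ, hμ, hu_max, hμ_min, hμu⟩ :=
    median_dual_lipschitz_formulation_general (l := fun i => (l i).toNNReal) hν
  simp only [Real.coe_toNNReal _ (hlpos _).le] at hμ_min hμu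
  exact ⟨u, hu.1, hu.2, fun v hv hv_sum => hu_max ⟨hv, hv_sum⟩,
    fun ρ hρ => hμu.symm.trans_le (hμ_min hρ), μ, hμ, hμu⟩
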